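/- arXiv:alg-geom/9601012 — 2 statements merged into one kernel-verified Lean document; each statement's English description precedes it below -/
import Mathlib

section
/- For every finitely generated left Λ-module M, the set Hom_Λ(M, Λ) of left Λ-linear maps M → Λ is a finite-dimensional complex vector space (under pointwise addition and scalar multiplication by ℂ ⊆ Λ₀), and dim_ℂ Hom_Λ(M, Λ) = dim_ℂ M. -/
/-!
Statement 10: for every finitely generated left `Λ`-module `M`, the left `Λ`-linear dual
`Hom_Λ(M, Λ)` is a finite-dimensional complex vector space (with pointwise operations and
scalars `ℂ ⊆ Λ₀`) of the same complex dimension as `M`.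
-/

noncomputable section

/-- `Λ n`: the exterior algebra of `ℂⁿ` (with its `n` odd generators `βᵢ`). -/
abbrev SuperAlg (n : ℕ) : Type := ExteriorAlgebra ℂ (Fin n → ℂ)

/-- `Λ` regarded as a left module over itself by left multiplication.  (This is exactly
Mathlib's canonical `Semiring.toModule`; we register it explicitly since instance search
does not fire automatically for the `CliffordAlgebra`-based definition.) -/
instance (n : ℕ) : Module (SuperAlg n) (SuperAlg n) := Semiring.toModule

/-- The actions of `ℂ` and `Λ` on `Λ` commute (`ℂ` is central in `Λ`); this provides the
pointwise `ℂ`-vector space structure on `Hom_Λ(M, Λ)`. -/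
instance (n : ℕ) : SMulCommClass (SuperAlg n) ℂ (SuperAlg n) :=
  SMulCommClass.symm ℂ (SuperAlg n) (SuperAlg n)

/-!
`Λ` is a Frobenius algebra: if `ε : Λ → ℂ` reads off the top-degree coefficient (the Berezin
integral), then `β_{sᶜ} * β_t` has zero integral for `t ≠ s` and integral `± 1` for `t = s`, so
`a ↦ ε (· * a)` carries the monomial basis to a dual basis up to signs. Hence every `ℂ`-linear
functional on `Λ` is `ε (· * a)` for a unique `a`, and applying this to `c ↦ g (c • m)` for
`g : M → ℂ` and `m : M` shows that `f ↦ ε ∘ f` is a bijection from `Hom_Λ(M, Λ)` onto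
`Hom_ℂ(M, ℂ)`.
-/

open Function Module

section FrobeniusMap

variable {R A M : Type*} [CommSemiring R] [Semiring A] [Algebra R A]
  [AddCommMonoid M] [Module R M] [Module A M] [IsScalarTower R A M]

/-- The map `a ↦ ε (· * a)` attached to a linear functional `ε` on an algebra `A`; the algebra is
Frobenius when `ε` can be chosen to make it bijective. -/
def frobeniusMap (ε : Dual R A) : A →ₗ[R] Dual R A :=
  (LinearMap.mul R A).flip.compr₂ ε

@[simp]
theorem frobeniusMap_apply (ε : Dual R A) (a c : A) : frobeniusMap ε a c = ε (c * a) :=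
  rfl

variable (M) in
/-- The comparison map `f ↦ ε ∘ f` from the `A`-linear dual of `M` to its `R`-linear dual. -/
def postcompFunctional (ε : Dual R A) : (M →ₗ[A] A) →ₗ[R] Dual R M :=
  LinearMap.compRight R ε ∘ₗ LinearMap.restrictScalarsₗ R A M A R

@[simp]
theorem postcompFunctional_apply (ε : Dual R A) (f : M →ₗ[A] A) (m : M) :
    postcompFunctional M ε f m = ε (f m) :=
  rfl

theorem eq_of_forall_functional_mul_eq {ε : Dual R A} (hε : Injective (frobeniusMap ε))
    {x y : A} (h : ∀ c, ε (c * x) = ε (c * y)) : x = y :=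
  hε (LinearMap.ext h)

theorem postcompFunctional_injective {ε : Dual R A} (hε : Injective (frobeniusMap ε)) :
    Injective (postcompFunctional M ε) := by
  intro f g hfg
  ext m
  refine eq_of_forall_functional_mul_eq hε fun c ↦ ?_
  simpa using LinearMap.congr_fun hfg (c • m)

theorem exists_forall_functional_mul_eq_apply_smul {ε : Dual R A}
    (hε : Surjective (frobeniusMap ε)) (g : Dual R M) (m : M) :
    ∃ a, ∀ c, ε (c * a) = g (c • m) := by
  obtain ⟨a, ha⟩ := hε (g ∘ₗ (LinearMap.toSpanSingleton A M m).restrictScalars R)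
  exact ⟨a, LinearMap.congr_fun ha⟩

theorem postcompFunctional_surjective {ε : Dual R A} (hε : Bijective (frobeniusMap ε)) :
    Surjective (postcompFunctional M ε) := by
  intro g
  choose f hf using exists_forall_functional_mul_eq_apply_smul (M := M) hε.surjective g
  refine ⟨⟨⟨f, fun x y ↦ ?_⟩, fun a x ↦ ?_⟩, ?_⟩
  · refine eq_of_forall_functional_mul_eq hε.injective fun c ↦ ?_
    rw [mul_add, map_add, hf, hf, hf, smul_add, map_add]
  · refine eq_of_forall_functional_mul_eq hε.injective fun c ↦ ?_
    rw [RingHom.id_apply, smul_eq_mul, ← mul_assoc, hf, hf, mul_smul]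
  · ext m
    simpa using hf m 1

variable (M) in
/-- For a Frobenius algebra `A`, the identification `f ↦ ε ∘ f` of the `A`-linear dual of `M` with
its `R`-linear dual. -/
def postcompFunctionalEquiv (ε : Dual R A) (hε : Bijective (frobeniusMap ε)) :
    (M →ₗ[A] A) ≃ₗ[R] Dual R M :=
  LinearEquiv.ofBijective (postcompFunctional M ε)
    ⟨postcompFunctional_injective hε.injective, postcompFunctional_surjective hε⟩

end FrobeniusMap

section BerezinIntegral

variable {ι R V : Type*} [LinearOrder ι] [CommRing R] [AddCommGroup V] [Module R V]
  (b : Basis ι R V)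

theorem exists_sign_exteriorAlgebra_basis_mul {s t : Finset ι} (hst : Disjoint s t) :
    ∃ u : ℤˣ, b.ExteriorAlgebra s * b.ExteriorAlgebra t =
      u • b.ExteriorAlgebra (s ∪ t) := by
  rw [← Finset.disjUnion_eq_union s t hst]
  exact ⟨_, ExteriorAlgebra.basis_mul_of_disjoint b ⟨s, rfl⟩ ⟨t, rfl⟩ hst⟩

variable [Fintype ι]

/-- The Berezin integral on an exterior algebra: the coefficient of the product of all basis
vectors, taken in increasing order. -/
def berezinIntegral : Dual R (ExteriorAlgebra R V) :=
  b.ExteriorAlgebra.coord Finset.univ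

theorem berezinIntegral_basis_univ : berezinIntegral b (b.ExteriorAlgebra Finset.univ) = 1 := by
  rw [berezinIntegral, Basis.coord_apply, Basis.repr_self, Finsupp.single_eq_same]

theorem berezinIntegral_basis_of_ne_univ {s : Finset ι} (hs : s ≠ Finset.univ) :
    berezinIntegral b (b.ExteriorAlgebra s) = 0 := by
  rw [berezinIntegral, Basis.coord_apply, Basis.repr_self, Finsupp.single_eq_of_ne hs.symm]

theorem berezinIntegral_basis_compl_mul_basis_of_ne {s t : Finset ι} (hts : t ≠ s) :
    berezinIntegral b (b.ExteriorAlgebra sᶜ * b.ExteriorAlgebra t) = 0 := by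
  by_cases hdisj : Disjoint sᶜ t
  · have hunion : sᶜ ∪ t ≠ Finset.univ := fun h ↦
      hts <| (IsCompl.of_eq hdisj.eq_bot h).compl_eq.symm.trans (compl_compl s)
    obtain ⟨u, hu⟩ := exists_sign_exteriorAlgebra_basis_mul b hdisj
    rw [hu, Units.smul_def, map_zsmul, berezinIntegral_basis_of_ne_univ b hunion, smul_zero]
  · have hmul : b.ExteriorAlgebra sᶜ * b.ExteriorAlgebra t = 0 :=
      ExteriorAlgebra.basis_mul_of_not_disjoint b ⟨sᶜ, rfl⟩ ⟨t, rfl⟩ hdisj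
    rw [hmul, map_zero]

theorem exists_sign_berezinIntegral_basis_compl_mul (s : Finset ι) :
    ∃ u : ℤˣ, ∀ a, berezinIntegral b (b.ExteriorAlgebra sᶜ * a) =
      u • b.ExteriorAlgebra.repr a s := by
  obtain ⟨u, hu⟩ := exists_sign_exteriorAlgebra_basis_mul b (disjoint_compl_left : Disjoint sᶜ s)
  refine ⟨u, fun a ↦ ?_⟩
  have hself : berezinIntegral b (b.ExteriorAlgebra sᶜ * b.ExteriorAlgebra s) = u • 1 := by
    rw [hu, Finset.union_comm, Finset.union_compl, Units.smul_def, map_zsmul,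
      berezinIntegral_basis_univ, Units.smul_def]
  calc berezinIntegral b (b.ExteriorAlgebra sᶜ * a)
      = ∑ t, b.ExteriorAlgebra.repr a t •
          berezinIntegral b (b.ExteriorAlgebra sᶜ * b.ExteriorAlgebra t) := by
        conv_lhs => rw [← b.ExteriorAlgebra.sum_repr a]
        simp only [Finset.mul_sum, mul_smul_comm, map_sum, map_smul]
    _ = b.ExteriorAlgebra.repr a s •
          berezinIntegral b (b.ExteriorAlgebra sᶜ * b.ExteriorAlgebra s) :=
        Fintype.sum_eq_single s fun t hts ↦ by
          rw [berezinIntegral_basis_compl_mul_basis_of_ne b hts, smul_zero]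
    _ = u • b.ExteriorAlgebra.repr a s := by
        rw [hself, smul_comm, smul_eq_mul, mul_one]

theorem frobeniusMap_berezinIntegral_injective :
    Injective (frobeniusMap (berezinIntegral b)) := by
  intro x y hxy
  refine b.ExteriorAlgebra.ext_elem fun s ↦ ?_
  obtain ⟨u, hu⟩ := exists_sign_berezinIntegral_basis_compl_mul b s
  have hs := LinearMap.congr_fun hxy (b.ExteriorAlgebra sᶜ)
  rw [frobeniusMap_apply, frobeniusMap_apply, hu, hu] at hs
  exact smul_left_cancel u hs

theorem frobeniusMap_berezinIntegral_surjective :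
    Surjective (frobeniusMap (berezinIntegral b)) := by
  intro φ
  choose u hu using exists_sign_berezinIntegral_basis_compl_mul b
  let a := b.ExteriorAlgebra.equivFun.symm fun s ↦ (u s)⁻¹ • φ (b.ExteriorAlgebra sᶜ)
  have ha (s) : b.ExteriorAlgebra.repr a s = (u s)⁻¹ • φ (b.ExteriorAlgebra sᶜ) :=
    congrFun (b.ExteriorAlgebra.equivFun.apply_symm_apply _) s
  refine ⟨a, b.ExteriorAlgebra.ext fun s ↦ ?_⟩
  rw [← compl_compl s, frobeniusMap_apply, hu, ha, smul_inv_smul]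

theorem frobeniusMap_berezinIntegral_bijective :
    Bijective (frobeniusMap (berezinIntegral b)) :=
  ⟨frobeniusMap_berezinIntegral_injective b, frobeniusMap_berezinIntegral_surjective b⟩

end BerezinIntegral

theorem statement10_general (K V M : Type*) [Field K] [AddCommGroup V] [Module K V]
    [FiniteDimensional K V] [AddCommGroup M] [Module K M] [Module (ExteriorAlgebra K V) M]
    [IsScalarTower K (ExteriorAlgebra K V) M] [Module.Finite (ExteriorAlgebra K V) M] :
    FiniteDimensional K (M →ₗ[ExteriorAlgebra K V] ExteriorAlgebra K V) ∧
    finrank K (M →ₗ[ExteriorAlgebra K V] ExteriorAlgebra K V) = finrank K M := by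
  let b := finBasis K V
  have : FiniteDimensional K (ExteriorAlgebra K V) := .of_basis b.ExteriorAlgebra
  have : FiniteDimensional K M := Module.Finite.trans (ExteriorAlgebra K V) M
  let e := postcompFunctionalEquiv M (berezinIntegral b)
    (frobeniusMap_berezinIntegral_bijective b)
  exact ⟨.equiv e.symm, e.finrank_eq.trans Subspace.dual_finrank_eq⟩

/-- For every finitely generated left `Λ`-module `M`, the set
`Hom_Λ(M, Λ)` of left `Λ`-linear maps `M → Λ` is a finite-dimensional complex vector space
(under pointwise addition and scalar multiplication by `ℂ ⊆ Λ₀`), and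
`dim_ℂ Hom_Λ(M, Λ) = dim_ℂ M`. -/
theorem statement10 (n : ℕ) (M : Type*) [AddCommGroup M] [Module ℂ M]
    [Module (SuperAlg n) M] [IsScalarTower ℂ (SuperAlg n) M] [Module.Finite (SuperAlg n) M] :
    FiniteDimensional ℂ (M →ₗ[SuperAlg n] SuperAlg n) ∧
    Module.finrank ℂ (M →ₗ[SuperAlg n] SuperAlg n) = Module.finrank ℂ M :=
  statement10_general ℂ (Fin n → ℂ) M

end
end

section
/- Let A be an even (k|l)-supermatrix over Λ, let m ≠ r be row indices, and let λ ∈ Λ₀ if rows m and r have the same parity and λ ∈ Λ₁ if they have opposite parity. Let B be the matrix obtained from A by replacing row m with (row m) + λ·(row r). Then B is again an even (k|l)-supermatrix; if the odd-odd blocks of both A and B are invertible then ber(B) = ber(A), and if the even-even blocks of both A and B are invertible then ber*(B) = ber*(A). -/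
noncomputable section

open ExteriorAlgebra

/-- The even part `Λ₀` of the exterior algebra, i.e. the degree-`0̄` part of its `ℤ₂`-grading. -/
def evenPart (n : ℕ) : Submodule ℂ (SuperAlg n) :=
  CliffordAlgebra.evenOdd (0 : QuadraticForm ℂ (Fin n → ℂ)) 0

/-- The odd part `Λ₁` of the exterior algebra, i.e. the degree-`1̄` part of its `ℤ₂`-grading. -/
def oddPart (n : ℕ) : Submodule ℂ (SuperAlg n) :=
  CliffordAlgebra.evenOdd (0 : QuadraticForm ℂ (Fin n → ℂ)) 1

/-- The determinant of a square matrix over a (possibly noncommutative) ring, given by the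
Leibniz formula, the product over each permutation being taken in the canonical order of the
index set.  For matrices whose entries lie in a central commutative subring (such as `Λ₀ ⊆ Λ`)
this is the usual determinant. -/
def ncdet {R : Type*} [Ring R] {k : ℕ} (M : Matrix (Fin k) (Fin k) R) : R :=
  ∑ σ : Equiv.Perm (Fin k), ((Equiv.Perm.sign σ : ℤˣ) : ℤ) • (List.ofFn fun i => M (σ i) i).prod

/-- The even-even block `X` of a `(k|l)`-block matrix. -/
def Xblk (n k l : ℕ) (A : Matrix (Fin (k + l)) (Fin (k + l)) (SuperAlg n)) :
    Matrix (Fin k) (Fin k) (SuperAlg n) :=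
  fun i j => A (Fin.castAdd l i) (Fin.castAdd l j)

/-- The even-odd block `α` of a `(k|l)`-block matrix. -/
def alphaBlk (n k l : ℕ) (A : Matrix (Fin (k + l)) (Fin (k + l)) (SuperAlg n)) :
    Matrix (Fin k) (Fin l) (SuperAlg n) :=
  fun i j => A (Fin.castAdd l i) (Fin.natAdd k j)

/-- The odd-even block `β` of a `(k|l)`-block matrix. -/
def betaBlk (n k l : ℕ) (A : Matrix (Fin (k + l)) (Fin (k + l)) (SuperAlg n)) :
    Matrix (Fin l) (Fin k) (SuperAlg n) :=
  fun i j => A (Fin.natAdd k i) (Fin.castAdd l j)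

/-- The odd-odd block `Y` of a `(k|l)`-block matrix. -/
def Yblk (n k l : ℕ) (A : Matrix (Fin (k + l)) (Fin (k + l)) (SuperAlg n)) :
    Matrix (Fin l) (Fin l) (SuperAlg n) :=
  fun i j => A (Fin.natAdd k i) (Fin.natAdd k j)

/-- `A` is an even `(k|l)`-supermatrix: the diagonal blocks `X`, `Y` have entries in `Λ₀` and
the off-diagonal blocks `α`, `β` have entries in `Λ₁`. -/
def IsEvenSupermatrix (n k l : ℕ) (A : Matrix (Fin (k + l)) (Fin (k + l)) (SuperAlg n)) : Prop :=
  (∀ i j, Xblk n k l A i j ∈ evenPart n) ∧ (∀ i j, Yblk n k l A i j ∈ evenPart n) ∧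
  (∀ i j, alphaBlk n k l A i j ∈ oddPart n) ∧ (∀ i j, betaBlk n k l A i j ∈ oddPart n)

/-- The Berezinian `ber(A) = det(X − α·Y⁻¹·β)·det(Y)⁻¹` (defined when `Y` is invertible). -/
def ber (n k l : ℕ) (A : Matrix (Fin (k + l)) (Fin (k + l)) (SuperAlg n)) : SuperAlg n :=
  ncdet (Xblk n k l A - alphaBlk n k l A * Ring.inverse (Yblk n k l A) * betaBlk n k l A) *
    Ring.inverse (ncdet (Yblk n k l A))

/-- The inverse Berezinian `ber*(A) = det(X)⁻¹·det(Y − β·X⁻¹·α)` (defined when `X` is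
invertible). -/
def berStar (n k l : ℕ) (A : Matrix (Fin (k + l)) (Fin (k + l)) (SuperAlg n)) : SuperAlg n :=
  Ring.inverse (ncdet (Xblk n k l A)) *
    ncdet (Yblk n k l A - betaBlk n k l A * Ring.inverse (Xblk n k l A) * alphaBlk n k l A)

/-!
Adding `c` times row `r` to row `p` is left multiplication by `1 + E`, where `E` has the single
entry `c`. If `p` and `r` have the same parity, then `1 + E` acts on one block row by a matrix of
determinant `1`. If `p` is even and `r` is odd, the Schur complement `X - α Y⁻¹ β` does not change.

If `p` is odd and `r` is even, put `P = α (Y + E α)⁻¹`. Then `Y = (1 - E P) (Y + E α)`, and the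
Schur complement is multiplied by `1 - P E`. With `a = P r p` the two factors have determinants
`1 - c a` and `1 - a c`, whose product is `1` because `a c = -c a` and `c² = 0`.

Exchanging the two parities reduces `ber*` to `ber`.
-/

open scoped Ring

section CentralMatrices

variable {R : Type*} [Ring R] {m n : Type*} [DecidableEq m]

theorem pi_single_one_mem_center (i j : m) :
    (Pi.single i 1 : m → R) j ∈ Subring.center R := by
  obtain rfl | hj := eq_or_ne j i
  · simp [one_mem]
  · simp [hj, zero_mem]

theorem mul_single_eq_vecMulVec [Fintype n] [DecidableEq n] (P : Matrix m n R) (p : n)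
    (r : m) (c : R) :
    P * Matrix.single p r c = Matrix.vecMulVec (fun i => P i p * c) (Pi.single r 1) := by
  ext i j
  obtain rfl | hj := eq_or_ne j r
  · simp [Matrix.vecMulVec_apply]
  · simp [Matrix.vecMulVec_apply, hj]

theorem single_mul_eq_vecMulVec [Fintype m] [DecidableEq n] (P : Matrix m n R) (p : n)
    (r : m) (c : R) :
    Matrix.single p r c * P = Matrix.vecMulVec (Pi.single p 1) (fun j => c * P r j) := by
  ext i j
  obtain rfl | hi := eq_or_ne i p
  · simp [Matrix.vecMulVec_apply]
  · simp [Matrix.vecMulVec_apply, hi]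

variable [Fintype m]

theorem single_mem_matrix_center (i j : m) {c : R} (hc : c ∈ Subring.center R) :
    Matrix.single i j c ∈ (Subring.center R).matrix :=
  (Matrix.single_mem_matrix (zero_mem (Subring.center R))).2 hc

theorem exists_map_subtype_eq_of_mem_matrix_center {M : Matrix m m R}
    (hM : M ∈ (Subring.center R).matrix) :
    ∃ N : Matrix m m (Subring.center R), N.map (Subring.center R).subtype = M :=
  ⟨fun i j => ⟨M i j, hM i j⟩, rfl⟩

theorem mem_matrix_center_iff_commute_scalar {M : Matrix m m R} :
    M ∈ (Subring.center R).matrix ↔ ∀ c : R, Commute (Matrix.scalar m c) M := by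
  simp only [Matrix.scalar_commute_iff, ← Matrix.ext_iff]
  exact ⟨fun h c i j => Subring.mem_center_iff.1 (h i j) c,
    fun h i j => Subring.mem_center_iff.2 fun c => h c i j⟩

theorem ringInverse_mem_matrix_center {M : Matrix m m R}
    (hM : M ∈ (Subring.center R).matrix) : M⁻¹ʳ ∈ (Subring.center R).matrix := by
  by_cases hu : IsUnit M
  · obtain ⟨u, rfl⟩ := hu
    rw [Ring.inverse_unit]
    rw [mem_matrix_center_iff_commute_scalar] at hM ⊢
    exact fun c => (hM c).units_inv_right
  · rw [Ring.inverse_non_unit _ hu]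
    exact zero_mem _

variable [Fintype n] [DecidableEq n]

theorem mul_single_mem_matrix_center {P : Matrix m n R} {p : n} {c : R}
    (hP : ∀ i, P i p * c ∈ Subring.center R) (r : m) :
    P * Matrix.single p r c ∈ (Subring.center R).matrix := fun i j => by
  rw [mul_single_eq_vecMulVec]
  exact Subring.mul_mem _ (hP i) (pi_single_one_mem_center r j)

theorem single_mul_mem_matrix_center {P : Matrix m n R} {r : m} {c : R}
    (hP : ∀ j, c * P r j ∈ Subring.center R) (p : n) :
    Matrix.single p r c * P ∈ (Subring.center R).matrix := fun i j => by
  rw [single_mul_eq_vecMulVec]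
  exact Subring.mul_mem _ (pi_single_one_mem_center p i) (hP j)

theorem mul_mul_mem_matrix_center {α : Matrix m n R} {V : Matrix n n R}
    {β : Matrix n m R} (hV : V ∈ (Subring.center R).matrix)
    (hαβ : ∀ i a b j, α i a * β b j ∈ Subring.center R) :
    α * V * β ∈ (Subring.center R).matrix := fun i j => by
  simp only [Matrix.mul_apply, Finset.sum_mul]
  refine sum_mem fun b _ => sum_mem fun a _ => ?_
  rw [mul_assoc, ← Subring.mem_center_iff.1 (hV a b) (β b j), ← mul_assoc]
  exact Subring.mul_mem _ (hαβ i a b j) (hV a b)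

end CentralMatrices

section NoncommutativeDeterminant

variable {R : Type*} [Ring R] {k l : ℕ}

theorem ncdet_map {S : Type*} [CommRing S] (f : S →+* R) (N : Matrix (Fin k) (Fin k) S) :
    ncdet (N.map f) = f N.det := by
  simp only [ncdet, Matrix.det_apply, map_sum, Units.smul_def, map_zsmul, ← List.prod_ofFn,
    map_list_prod, List.map_ofFn, Matrix.map_apply, Function.comp_def]

theorem ncdet_mem_center {M : Matrix (Fin k) (Fin k) R} (hM : M ∈ (Subring.center R).matrix) :
    ncdet M ∈ Subring.center R := by
  obtain ⟨N, rfl⟩ := exists_map_subtype_eq_of_mem_matrix_center hM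
  exact ncdet_map (Subring.center R).subtype N ▸ N.det.2

theorem ncdet_mul {M N : Matrix (Fin k) (Fin k) R} (hM : M ∈ (Subring.center R).matrix)
    (hN : N ∈ (Subring.center R).matrix) : ncdet (M * N) = ncdet M * ncdet N := by
  obtain ⟨M, rfl⟩ := exists_map_subtype_eq_of_mem_matrix_center hM
  obtain ⟨N, rfl⟩ := exists_map_subtype_eq_of_mem_matrix_center hN
  rw [← Matrix.map_mul, ncdet_map, ncdet_map, ncdet_map, Matrix.det_mul, map_mul]

theorem ncdet_one_add_single {p r : Fin k} (hpr : p ≠ r) {c : R} (hc : c ∈ Subring.center R) :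
    ncdet (1 + Matrix.single p r c) = 1 := by
  have h := ncdet_map (Subring.center R).subtype (Matrix.transvection p r ⟨c, hc⟩)
  rwa [Matrix.det_transvection_of_ne _ _ hpr, map_one, Matrix.transvection,
    Matrix.map_add _ (map_add _), Matrix.map_one _ (map_zero _) (map_one _),
    Matrix.map_single] at h

theorem ncdet_one_sub_vecMulVec {u v : Fin k → R} (hu : ∀ i, u i ∈ Subring.center R)
    (hv : ∀ i, v i ∈ Subring.center R) :
    ncdet (1 - Matrix.vecMulVec u v) = 1 - v ⬝ᵥ u := by
  let u' : Fin k → Subring.center R := fun i => ⟨u i, hu i⟩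
  let v' : Fin k → Subring.center R := fun i => ⟨v i, hv i⟩
  have h_map : (1 - Matrix.vecMulVec u' v').map (Subring.center R).subtype =
      1 - Matrix.vecMulVec u v := by
    rw [Matrix.map_sub _ (map_sub _), Matrix.map_one _ (map_zero _) (map_one _)]
    rfl
  have h_det : (1 - Matrix.vecMulVec u' v').det = 1 - v' ⬝ᵥ u' := by
    rw [Matrix.vecMulVec_eq Unit, Matrix.det_one_sub_mul_comm, Matrix.det_unique]
    rfl
  rw [← h_map, ncdet_map, h_det, map_sub, map_one, RingHom.map_dotProduct]
  rfl

theorem ncdet_one_sub_mul_single {P : Matrix (Fin k) (Fin l) R} {p : Fin l} {c : R}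
    (hP : ∀ i, P i p * c ∈ Subring.center R) (r : Fin k) :
    ncdet (1 - P * Matrix.single p r c) = 1 - P r p * c := by
  rw [mul_single_eq_vecMulVec, ncdet_one_sub_vecMulVec hP (pi_single_one_mem_center r),
    single_one_dotProduct]

theorem ncdet_one_sub_single_mul {P : Matrix (Fin k) (Fin l) R} {r : Fin k} {c : R}
    (hP : ∀ j, c * P r j ∈ Subring.center R) (p : Fin l) :
    ncdet (1 - Matrix.single p r c * P) = 1 - c * P r p := by
  rw [single_mul_eq_vecMulVec, ncdet_one_sub_vecMulVec (pi_single_one_mem_center p) hP,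
    dotProduct_single_one]

/- The odd counterpart of `det (1 - P * E) = det (1 - E * P)`: anticommutation turns the equality
of the two determinants into reciprocity. -/
theorem ncdet_one_sub_mul_single_mul_ncdet_one_sub_single_mul {P : Matrix (Fin k) (Fin l) R}
    {c : R} (hPc : ∀ i j, P i j * c ∈ Subring.center R) (hcP : ∀ i j, c * P i j ∈ Subring.center R)
    (hanti : ∀ i j, P i j * c = -(c * P i j)) (hcc : c * c = 0) (p : Fin l) (r : Fin k) :
    ncdet (1 - P * Matrix.single p r c) * ncdet (1 - Matrix.single p r c * P) = 1 := by
  rw [ncdet_one_sub_mul_single (hPc · p), ncdet_one_sub_single_mul (hcP r)]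
  calc (1 - P r p * c) * (1 - c * P r p)
      = 1 - (P r p * c + c * P r p) + P r p * (c * c) * P r p := by noncomm_ring
    _ = 1 := by rw [hanti, hcc]; simp

end NoncommutativeDeterminant

section ElementaryMatrix

variable {R : Type*} [Ring R]

theorem updateRow_add_mul_eq_one_add_single_mul {m n : Type*} [Fintype m] [DecidableEq m]
    (A : Matrix m n R) (p r : m) (c : R) :
    (A.updateRow p fun j => A p j + c * A r j) = (1 + Matrix.single p r c) * A := by
  rw [Matrix.add_mul, Matrix.one_mul]
  ext i j
  obtain rfl | hi := eq_or_ne i p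
  · simp
  · simp [hi]

theorem submatrix_one_add_single_mul {m n : Type*} [Fintype m] [Fintype n] [DecidableEq m]
    [DecidableEq n] (e : m ≃ n) (A : Matrix n n R) (p r : m) (c : R) :
    ((1 + Matrix.single (e p) (e r) c) * A).submatrix e e =
      (1 + Matrix.single p r c) * A.submatrix e e := by
  rw [← Matrix.submatrix_mul_equiv _ _ e e e, Matrix.submatrix_add, Pi.add_apply, Pi.add_apply,
    Matrix.submatrix_one_equiv, Matrix.submatrix_single_equiv, e.symm_apply_apply,
    e.symm_apply_apply]

variable {m n : Type*} [DecidableEq m] [DecidableEq n] (c : R)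

theorem single_inl_inl_eq_fromBlocks (p r : m) :
    Matrix.single (.inl p : m ⊕ n) (.inl r : m ⊕ n) c =
      Matrix.fromBlocks (Matrix.single p r c) 0 0 0 := by
  ext (i | i) (j | j) <;> simp [Matrix.single_apply]

theorem single_inl_inr_eq_fromBlocks (p : m) (r : n) :
    Matrix.single (.inl p : m ⊕ n) (.inr r : m ⊕ n) c =
      Matrix.fromBlocks 0 (Matrix.single p r c) 0 0 := by
  ext (i | i) (j | j) <;> simp [Matrix.single_apply]

theorem single_inr_inl_eq_fromBlocks (p : n) (r : m) :
    Matrix.single (.inr p : m ⊕ n) (.inl r : m ⊕ n) c =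
      Matrix.fromBlocks 0 0 (Matrix.single p r c) 0 := by
  ext (i | i) (j | j) <;> simp [Matrix.single_apply]

theorem single_inr_inr_eq_fromBlocks (p r : n) :
    Matrix.single (.inr p : m ⊕ n) (.inr r : m ⊕ n) c =
      Matrix.fromBlocks 0 0 0 (Matrix.single p r c) := by
  ext (i | i) (j | j) <;> simp [Matrix.single_apply]

variable [Fintype m] [Fintype n]
  (X : Matrix m m R) (α : Matrix m n R) (β : Matrix n m R) (Y : Matrix n n R)

theorem one_add_single_inl_inl_mul_fromBlocks (p r : m) :
    (1 + Matrix.single (.inl p) (.inl r) c) * Matrix.fromBlocks X α β Y =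
      Matrix.fromBlocks ((1 + Matrix.single p r c) * X) ((1 + Matrix.single p r c) * α) β Y := by
  simp [single_inl_inl_eq_fromBlocks, Matrix.add_mul, Matrix.fromBlocks_multiply,
    Matrix.fromBlocks_add]

theorem one_add_single_inl_inr_mul_fromBlocks (p : m) (r : n) :
    (1 + Matrix.single (.inl p) (.inr r) c) * Matrix.fromBlocks X α β Y =
      Matrix.fromBlocks (X + Matrix.single p r c * β) (α + Matrix.single p r c * Y) β Y := by
  simp [single_inl_inr_eq_fromBlocks, Matrix.add_mul, Matrix.fromBlocks_multiply,
    Matrix.fromBlocks_add]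

theorem one_add_single_inr_inl_mul_fromBlocks (p : n) (r : m) :
    (1 + Matrix.single (.inr p) (.inl r) c) * Matrix.fromBlocks X α β Y =
      Matrix.fromBlocks X α (β + Matrix.single p r c * X) (Y + Matrix.single p r c * α) := by
  simp [single_inr_inl_eq_fromBlocks, Matrix.add_mul, Matrix.fromBlocks_multiply,
    Matrix.fromBlocks_add]

theorem one_add_single_inr_inr_mul_fromBlocks (p r : n) :
    (1 + Matrix.single (.inr p) (.inr r) c) * Matrix.fromBlocks X α β Y =
      Matrix.fromBlocks X α ((1 + Matrix.single p r c) * β) ((1 + Matrix.single p r c) * Y) := by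
  simp [single_inr_inr_eq_fromBlocks, Matrix.add_mul, Matrix.fromBlocks_multiply,
    Matrix.fromBlocks_add]

end ElementaryMatrix

section Berezinian

variable {R : Type*} [Ring R] {k l : ℕ}

/-- The Schur complement `X - α Y⁻¹ β` of the lower right block of `[[X, α], [β, Y]]`. -/
def schurComplement (M : Matrix (Fin k ⊕ Fin l) (Fin k ⊕ Fin l) R) : Matrix (Fin k) (Fin k) R :=
  M.toBlocks₁₁ - M.toBlocks₁₂ * M.toBlocks₂₂⁻¹ʳ * M.toBlocks₂₁

/-- The Berezinian over an arbitrary ring, for block matrices indexed by a disjoint sum. Like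
`ber`, it is a junk value unless the lower right block is invertible. -/
def berezinian (M : Matrix (Fin k ⊕ Fin l) (Fin k ⊕ Fin l) R) : R :=
  ncdet (schurComplement M) * (ncdet M.toBlocks₂₂)⁻¹ʳ

/-- The counterpart of `berStar` over an arbitrary ring: `Y - β X⁻¹ α` is the Schur complement of
the matrix with its two blocks of indices exchanged. -/
def berezinianStar (M : Matrix (Fin k ⊕ Fin l) (Fin k ⊕ Fin l) R) : R :=
  (ncdet M.toBlocks₁₁)⁻¹ʳ * ncdet (schurComplement (M.submatrix Sum.swap Sum.swap))

variable {X : Matrix (Fin k) (Fin k) R} {α : Matrix (Fin k) (Fin l) R}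
  {β : Matrix (Fin l) (Fin k) R} {Y : Matrix (Fin l) (Fin l) R}

theorem berezinian_fromBlocks :
    berezinian (Matrix.fromBlocks X α β Y) = ncdet (X - α * Y⁻¹ʳ * β) * (ncdet Y)⁻¹ʳ := rfl

theorem berezinian_mul_upper_rows {T : Matrix (Fin k) (Fin k) R}
    (hT : T ∈ (Subring.center R).matrix) (hS : X - α * Y⁻¹ʳ * β ∈ (Subring.center R).matrix) :
    berezinian (Matrix.fromBlocks (T * X) (T * α) β Y) =
      ncdet T * berezinian (Matrix.fromBlocks X α β Y) := by
  have h_schur : T * X - T * α * Y⁻¹ʳ * β = T * (X - α * Y⁻¹ʳ * β) := by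
    simp only [Matrix.mul_sub, Matrix.mul_assoc]
  rw [berezinian_fromBlocks, berezinian_fromBlocks, h_schur, ncdet_mul hT hS, mul_assoc]

theorem berezinian_mul_lower_rows {T : Matrix (Fin l) (Fin l) R}
    (hT : T ∈ (Subring.center R).matrix) (hY : Y ∈ (Subring.center R).matrix)
    (hu : IsUnit Y) (hu' : IsUnit (T * Y)) :
    berezinian (Matrix.fromBlocks X α (T * β) (T * Y)) =
      berezinian (Matrix.fromBlocks X α β Y) * (ncdet T)⁻¹ʳ := by
  have h_inverse : (T * Y)⁻¹ʳ * T = Y⁻¹ʳ := by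
    calc (T * Y)⁻¹ʳ * T = (T * Y)⁻¹ʳ * (T * Y) * Y⁻¹ʳ := by
          rw [← mul_assoc, Ring.mul_inverse_cancel_right _ _ hu]
      _ = Y⁻¹ʳ := by rw [Ring.inverse_mul_cancel _ hu', one_mul]
  have h_comm : Commute (ncdet T) (ncdet Y) :=
    Subring.mem_center_iff.1 (ncdet_mem_center hY) (ncdet T)
  rw [berezinian_fromBlocks, berezinian_fromBlocks, Matrix.mul_assoc α, ← Matrix.mul_assoc _ T,
    h_inverse, ← Matrix.mul_assoc, ncdet_mul hT hY, Ring.mul_inverse_rev' h_comm, mul_assoc]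

theorem berezinian_add_mul_lower_rows (hu : IsUnit Y) (E : Matrix (Fin k) (Fin l) R) :
    berezinian (Matrix.fromBlocks (X + E * β) (α + E * Y) β Y) =
      berezinian (Matrix.fromBlocks X α β Y) := by
  have h_schur : X + E * β - (α + E * Y) * Y⁻¹ʳ * β = X - α * Y⁻¹ʳ * β := by
    rw [Matrix.add_mul, Matrix.mul_assoc E Y, Ring.mul_inverse_cancel _ hu, Matrix.mul_one,
      Matrix.add_mul]
    abel
  rw [berezinian_fromBlocks, berezinian_fromBlocks, h_schur]

theorem sub_mul_add_mul_eq_one_sub_mul_mul_sub (hu : IsUnit Y) {E : Matrix (Fin l) (Fin k) R}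
    {P : Matrix (Fin k) (Fin l) R} (hP : P * (Y + E * α) = α) :
    X - P * (β + E * X) = (1 - P * E) * (X - α * Y⁻¹ʳ * β) := by
  have h_factor : P * Y = (1 - P * E) * α := by
    rw [Matrix.sub_mul, Matrix.one_mul, eq_sub_iff_add_eq, Matrix.mul_assoc, ← Matrix.mul_add, hP]
  calc X - P * (β + E * X)
      = (1 - P * E) * X - P * β := by
        rw [Matrix.mul_add, Matrix.sub_mul, Matrix.one_mul, Matrix.mul_assoc]; abel
    _ = (1 - P * E) * X - P * Y * Y⁻¹ʳ * β := by
        rw [Matrix.mul_assoc P, Ring.mul_inverse_cancel _ hu, Matrix.mul_one]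
    _ = (1 - P * E) * (X - α * Y⁻¹ʳ * β) := by
        rw [h_factor]
        simp only [Matrix.mul_sub, Matrix.mul_assoc]

theorem ringInverse_eq_of_mul_eq_one {a b : R} (ha : a ∈ Subring.center R) (hab : a * b = 1) :
    b⁻¹ʳ = a :=
  Ring.inverse_unit ⟨b, a, (Subring.mem_center_iff.1 ha b).trans hab, hab⟩

theorem berezinian_add_mul_upper_rows {E : Matrix (Fin l) (Fin k) R} {P : Matrix (Fin k) (Fin l) R}
    (hP : P * (Y + E * α) = α) (hu : IsUnit Y) (hu' : IsUnit (Y + E * α))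
    (hS : X - α * Y⁻¹ʳ * β ∈ (Subring.center R).matrix)
    (hW : Y + E * α ∈ (Subring.center R).matrix)
    (hPE : P * E ∈ (Subring.center R).matrix) (hEP : E * P ∈ (Subring.center R).matrix)
    (h_recip : ncdet (1 - P * E) * ncdet (1 - E * P) = 1) :
    berezinian (Matrix.fromBlocks X α (β + E * X) (Y + E * α)) =
      berezinian (Matrix.fromBlocks X α β Y) := by
  have h_inverse : α * (Y + E * α)⁻¹ʳ = P := by
    nth_rw 1 [← hP]
    rw [Matrix.mul_assoc, Ring.mul_inverse_cancel _ hu', Matrix.mul_one]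
  have h_schur := sub_mul_add_mul_eq_one_sub_mul_mul_sub (X := X) (β := β) hu hP
  have hY : Y = (1 - E * P) * (Y + E * α) := by
    rw [Matrix.sub_mul, Matrix.one_mul, Matrix.mul_assoc, hP, add_sub_cancel_right]
  have hPE' := sub_mem (one_mem _) hPE
  have hPE_center := ncdet_mem_center hPE'
  have h_det : (ncdet Y)⁻¹ʳ = (ncdet (Y + E * α))⁻¹ʳ * ncdet (1 - P * E) := by
    rw [← ringInverse_eq_of_mul_eq_one hPE_center h_recip,
      ← Ring.mul_inverse_rev' (Subring.mem_center_iff.1 (ncdet_mem_center hW) _),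
      ← ncdet_mul (sub_mem (one_mem _) hEP) hW, ← hY]
  rw [berezinian_fromBlocks, berezinian_fromBlocks, h_inverse, h_schur, ncdet_mul hPE' hS, h_det,
    mul_assoc, ← Subring.mem_center_iff.1 hPE_center, mul_assoc]

end Berezinian

section ParityGrading

variable {K V : Type*} [CommRing K] [AddCommGroup V] [Module K V]

variable (K V) in
/-- The homogeneous part of degree `i` in the `ℤ/2`-grading of an exterior algebra; `evenPart` and
`oddPart` are its values at `0` and `1`. -/
abbrev parityPart (i : ZMod 2) : Submodule K (ExteriorAlgebra K V) :=
  CliffordAlgebra.evenOdd (0 : QuadraticForm K V) i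

variable {x y : ExteriorAlgebra K V}

theorem mul_mem_parityPart {i j : ZMod 2} (hx : x ∈ parityPart K V i) (hy : y ∈ parityPart K V j) :
    x * y ∈ parityPart K V (i + j) :=
  SetLike.mul_mem_graded hx hy

theorem mul_eq_smul_mul_of_mem_parityPart {i j : ZMod 2} (hx : x ∈ parityPart K V i)
    (hy : y ∈ parityPart K V j) : x * y = (-1 : ℤˣ) ^ (j * i) • (y * x) := by
  simpa using CliffordAlgebra.map_mul_map_of_isOrtho_of_mem_evenOdd
    (QuadraticMap.Isometry.id (0 : QuadraticForm K V)) (QuadraticMap.Isometry.id 0)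
    (fun _ _ => by simp [QuadraticMap.isOrtho_def]) x y hx hy

theorem mul_eq_neg_mul_of_mem_parityPart_one (hx : x ∈ parityPart K V 1)
    (hy : y ∈ parityPart K V 1) : x * y = -(y * x) := by
  simpa using mul_eq_smul_mul_of_mem_parityPart hx hy

theorem mem_center_of_mem_parityPart_zero (hx : x ∈ parityPart K V 0) :
    x ∈ Subring.center (ExteriorAlgebra K V) := by
  refine Subring.mem_center_iff.2 fun y => ?_
  have hy : y ∈ parityPart K V 0 ⊔ parityPart K V 1 :=
    (CliffordAlgebra.evenOdd_isCompl (0 : QuadraticForm K V)).sup_eq_top ▸ Submodule.mem_top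
  obtain ⟨y₀, hy₀, y₁, hy₁, rfl⟩ := Submodule.mem_sup.1 hy
  have h₀ : y₀ * x = x * y₀ := by simpa using mul_eq_smul_mul_of_mem_parityPart hy₀ hx
  have h₁ : y₁ * x = x * y₁ := by simpa using mul_eq_smul_mul_of_mem_parityPart hy₁ hx
  rw [add_mul, mul_add, h₀, h₁]

theorem mul_mem_center_of_mem_parityPart_one (hx : x ∈ parityPart K V 1)
    (hy : y ∈ parityPart K V 1) : x * y ∈ Subring.center (ExteriorAlgebra K V) :=
  mem_center_of_mem_parityPart_zero <| by
    simpa only [CharTwo.add_self_eq_zero] using mul_mem_parityPart hx hy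

theorem mul_self_eq_zero_of_mem_parityPart_one (hx : x ∈ parityPart K V 1) : x * x = 0 := by
  refine CliffordAlgebra.odd_induction 0 (P := fun x _ => x * x = 0) ?_ ?_ ?_ x hx
  · exact ExteriorAlgebra.ι_sq_zero
  · intro x y hx hy ihx ihy
    rw [mul_add, add_mul, add_mul, ihx, ihy, mul_eq_neg_mul_of_mem_parityPart_one hx hy]
    simp
  · intro u v x _ ih
    have huv := mem_center_of_mem_parityPart_zero
      (CliffordAlgebra.ι_mul_ι_mem_evenOdd_zero (0 : QuadraticForm K V) u v)
    rw [mul_assoc, ← mul_assoc x, Subring.mem_center_iff.1 huv x, mul_assoc _ x x, ih,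
      mul_zero, mul_zero]

end ParityGrading

section Supermatrix

variable {K V : Type*} [CommRing K] [AddCommGroup V] [Module K V] {k l : ℕ}

/-- The parity of an index of a block matrix: `0` on the first block and `1` on the second. -/
def indexParity {m n : Type*} : m ⊕ n → ZMod 2 :=
  Sum.elim (fun _ => 0) (fun _ => 1)

/-- Even supermatrices, as the matrices whose entry at `(i, j)` is homogeneous of degree the sum
of the parities of `i` and `j`. -/
def IsSupermatrix {m n : Type*} (M : Matrix (m ⊕ n) (m ⊕ n) (ExteriorAlgebra K V)) : Prop :=
  ∀ i j, M i j ∈ parityPart K V (indexParity i + indexParity j)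

theorem indexParity_swap {m n : Type*} (i : m ⊕ n) :
    indexParity i.swap = indexParity i + 1 := by
  rcases i with i | i
  · rfl
  · rfl

theorem indexParity_swap_add_swap {m n : Type*} (i j : m ⊕ n) :
    indexParity i.swap + indexParity j.swap = indexParity i + indexParity j := by
  rw [indexParity_swap, indexParity_swap, add_add_add_comm, CharTwo.add_self_eq_zero, add_zero]

namespace IsSupermatrix

theorem submatrix_swap {m n : Type*} {M : Matrix (m ⊕ n) (m ⊕ n) (ExteriorAlgebra K V)}
    (hM : IsSupermatrix M) : IsSupermatrix (M.submatrix Sum.swap Sum.swap) := fun i j => by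
  rw [← indexParity_swap_add_swap]
  exact hM i.swap j.swap

theorem one_add_single_mul {m n : Type*} [Fintype m] [Fintype n] [DecidableEq m] [DecidableEq n]
    {M : Matrix (m ⊕ n) (m ⊕ n) (ExteriorAlgebra K V)} (hM : IsSupermatrix M) {p r : m ⊕ n}
    {c : ExteriorAlgebra K V} (hc : c ∈ parityPart K V (indexParity p + indexParity r)) :
    IsSupermatrix ((1 + Matrix.single p r c) * M) := fun i j => by
  rw [Matrix.add_mul, Matrix.one_mul, Matrix.add_apply]
  refine add_mem (hM i j) ?_
  obtain rfl | hi := eq_or_ne i p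
  · have h_degree : indexParity i + indexParity r + (indexParity r + indexParity j) =
        indexParity i + indexParity j := by
      rw [add_assoc, CharTwo.add_cancel_left]
    rw [Matrix.single_mul_apply_same, ← h_degree]
    exact mul_mem_parityPart hc (hM r j)
  · rw [Matrix.single_mul_apply_of_ne _ _ _ _ _ hi]
    exact zero_mem _

variable {M : Matrix (Fin k ⊕ Fin l) (Fin k ⊕ Fin l) (ExteriorAlgebra K V)}

theorem toBlocks₂₂_mem_matrix_center (hM : IsSupermatrix M) :
    M.toBlocks₂₂ ∈ (Subring.center (ExteriorAlgebra K V)).matrix := fun i j =>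
  mem_center_of_mem_parityPart_zero (hM (.inr i) (.inr j))

theorem schurComplement_mem_matrix_center (hM : IsSupermatrix M) :
    schurComplement M ∈ (Subring.center (ExteriorAlgebra K V)).matrix :=
  sub_mem (fun i j => mem_center_of_mem_parityPart_zero (hM (.inl i) (.inl j)))
    (mul_mul_mem_matrix_center (ringInverse_mem_matrix_center hM.toBlocks₂₂_mem_matrix_center)
      fun i a b j => mul_mem_center_of_mem_parityPart_one (hM (.inl i) (.inr a))
        (hM (.inr b) (.inl j)))

theorem berezinianStar_eq_berezinian_submatrix_swap (hM : IsSupermatrix M) :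
    berezinianStar M = berezinian (M.submatrix Sum.swap Sum.swap) :=
  Subring.mem_center_iff.1 (ncdet_mem_center hM.submatrix_swap.schurComplement_mem_matrix_center) _

variable {X : Matrix (Fin k) (Fin k) (ExteriorAlgebra K V)}
  {α : Matrix (Fin k) (Fin l) (ExteriorAlgebra K V)}
  {β : Matrix (Fin l) (Fin k) (ExteriorAlgebra K V)}
  {Y : Matrix (Fin l) (Fin l) (ExteriorAlgebra K V)} {c : ExteriorAlgebra K V}

theorem add_single_mul_mem_matrix_center (hM : IsSupermatrix (Matrix.fromBlocks X α β Y))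
    (hc : c ∈ parityPart K V 1) (p : Fin l) (r : Fin k) :
    Y + Matrix.single p r c * α ∈ (Subring.center (ExteriorAlgebra K V)).matrix :=
  add_mem hM.toBlocks₂₂_mem_matrix_center <| single_mul_mem_matrix_center
    (fun j => mul_mem_center_of_mem_parityPart_one hc (hM (.inl r) (.inr j))) p

theorem berezinian_add_single_mul_upper_rows (hM : IsSupermatrix (Matrix.fromBlocks X α β Y))
    (hc : c ∈ parityPart K V 1) (p : Fin l) (r : Fin k) (hu : IsUnit Y)
    (hu' : IsUnit (Y + Matrix.single p r c * α)) :
    berezinian (Matrix.fromBlocks X α (β + Matrix.single p r c * X)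
      (Y + Matrix.single p r c * α)) = berezinian (Matrix.fromBlocks X α β Y) := by
  have hW := hM.add_single_mul_mem_matrix_center hc p r
  set W := Y + Matrix.single p r c * α
  have hα : ∀ i j, α i j ∈ parityPart K V 1 := fun i j => hM (.inl i) (.inr j)
  have hanti : ∀ i j, (α * W⁻¹ʳ) i j * c = -(c * (α * W⁻¹ʳ) i j) := fun i j => by
    simp only [Matrix.mul_apply, Finset.sum_mul, Finset.mul_sum, ← Finset.sum_neg_distrib]
    refine Finset.sum_congr rfl fun a _ => ?_
    rw [mul_assoc, ← Subring.mem_center_iff.1 (ringInverse_mem_matrix_center hW a j), ← mul_assoc,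
      mul_eq_neg_mul_of_mem_parityPart_one (hα i a) hc, neg_mul, mul_assoc]
  have hcP : ∀ i j, c * (α * W⁻¹ʳ) i j ∈ Subring.center (ExteriorAlgebra K V) := fun i j => by
    simp only [Matrix.mul_apply, Finset.mul_sum, ← mul_assoc]
    exact sum_mem fun a _ => Subring.mul_mem _
      (mul_mem_center_of_mem_parityPart_one hc (hα i a)) (ringInverse_mem_matrix_center hW a j)
  have hPc : ∀ i j, (α * W⁻¹ʳ) i j * c ∈ Subring.center (ExteriorAlgebra K V) := fun i j =>
    hanti i j ▸ neg_mem (hcP i j)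
  have hP : α * W⁻¹ʳ * W = α := by
    rw [Matrix.mul_assoc, Ring.inverse_mul_cancel _ hu', Matrix.mul_one]
  exact berezinian_add_mul_upper_rows hP hu hu' hM.schurComplement_mem_matrix_center hW
    (mul_single_mem_matrix_center (hPc · p) r) (single_mul_mem_matrix_center (hcP r) p)
    (ncdet_one_sub_mul_single_mul_ncdet_one_sub_single_mul hPc hcP hanti
      (mul_self_eq_zero_of_mem_parityPart_one hc) p r)

theorem berezinian_one_add_single_mul (hM : IsSupermatrix M) {p r : Fin k ⊕ Fin l} (hpr : p ≠ r)
    (hc : c ∈ parityPart K V (indexParity p + indexParity r)) (hu : IsUnit M.toBlocks₂₂)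
    (hu' : IsUnit ((1 + Matrix.single p r c) * M).toBlocks₂₂) :
    berezinian ((1 + Matrix.single p r c) * M) = berezinian M := by
  obtain ⟨X, α, β, Y, rfl⟩ : ∃ X α β Y, M = Matrix.fromBlocks X α β Y :=
    ⟨_, _, _, _, M.fromBlocks_toBlocks.symm⟩
  have hS : X - α * Y⁻¹ʳ * β ∈ (Subring.center (ExteriorAlgebra K V)).matrix :=
    hM.schurComplement_mem_matrix_center
  have hY : Y ∈ (Subring.center (ExteriorAlgebra K V)).matrix := hM.toBlocks₂₂_mem_matrix_center
  rcases p with p | p <;> rcases r with r | r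
  · have hc' := mem_center_of_mem_parityPart_zero hc
    have hT := add_mem (one_mem _) (single_mem_matrix_center p r hc')
    rw [one_add_single_inl_inl_mul_fromBlocks, berezinian_mul_upper_rows hT hS,
      ncdet_one_add_single (ne_of_apply_ne _ hpr) hc', one_mul]
  · rw [one_add_single_inl_inr_mul_fromBlocks]
    exact berezinian_add_mul_lower_rows hu _
  · rw [one_add_single_inr_inl_mul_fromBlocks] at hu' ⊢
    exact hM.berezinian_add_single_mul_upper_rows hc p r hu hu'
  · have hc' := mem_center_of_mem_parityPart_zero hc
    have hT := add_mem (one_mem _) (single_mem_matrix_center p r hc')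
    rw [one_add_single_inr_inr_mul_fromBlocks] at hu' ⊢
    rw [berezinian_mul_lower_rows hT hY hu hu', ncdet_one_add_single (ne_of_apply_ne _ hpr) hc',
      Ring.inverse_one, mul_one]

theorem berezinianStar_one_add_single_mul (hM : IsSupermatrix M) {p r : Fin k ⊕ Fin l}
    (hpr : p ≠ r) (hc : c ∈ parityPart K V (indexParity p + indexParity r))
    (hu : IsUnit M.toBlocks₁₁) (hu' : IsUnit ((1 + Matrix.single p r c) * M).toBlocks₁₁) :
    berezinianStar ((1 + Matrix.single p r c) * M) = berezinianStar M := by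
  have h_swap : ((1 + Matrix.single p r c) * M).submatrix Sum.swap Sum.swap =
      (1 + Matrix.single p.swap r.swap c) * M.submatrix Sum.swap Sum.swap := by
    simpa using submatrix_one_add_single_mul (Equiv.sumComm (Fin l) (Fin k)) M p.swap r.swap c
  rw [berezinianStar_eq_berezinian_submatrix_swap (hM.one_add_single_mul hc),
    berezinianStar_eq_berezinian_submatrix_swap hM, h_swap]
  refine hM.submatrix_swap.berezinian_one_add_single_mul (Sum.swap_leftInverse.injective.ne hpr)
    (indexParity_swap_add_swap p r ▸ hc) hu ?_
  rw [← h_swap]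
  exact hu'

end IsSupermatrix

theorem statement14_general {M : Matrix (Fin k ⊕ Fin l) (Fin k ⊕ Fin l) (ExteriorAlgebra K V)}
    (hM : IsSupermatrix M) {p r : Fin k ⊕ Fin l} (hpr : p ≠ r) {c : ExteriorAlgebra K V}
    (hc : c ∈ parityPart K V (indexParity p + indexParity r)) :
    IsSupermatrix (M.updateRow p fun j => M p j + c * M r j) ∧
    (IsUnit M.toBlocks₂₂ → IsUnit (M.updateRow p fun j => M p j + c * M r j).toBlocks₂₂ →
      berezinian (M.updateRow p fun j => M p j + c * M r j) = berezinian M) ∧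
    (IsUnit M.toBlocks₁₁ → IsUnit (M.updateRow p fun j => M p j + c * M r j).toBlocks₁₁ →
      berezinianStar (M.updateRow p fun j => M p j + c * M r j) = berezinianStar M) := by
  rw [updateRow_add_mul_eq_one_add_single_mul]
  exact ⟨hM.one_add_single_mul hc, hM.berezinian_one_add_single_mul hpr hc,
    hM.berezinianStar_one_add_single_mul hpr hc⟩

end Supermatrix

section FinSumIndices

variable {n k l : ℕ} {A : Matrix (Fin (k + l)) (Fin (k + l)) (SuperAlg n)}

theorem isEvenSupermatrix_iff_isSupermatrix_submatrix :
    IsEvenSupermatrix n k l A ↔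
      IsSupermatrix (A.submatrix finSumFinEquiv finSumFinEquiv) := by
  constructor
  · rintro ⟨hX, hY, hα, hβ⟩ (i | i) (j | j)
    exacts [hX i j, hα i j, hβ i j, hY i j]
  · intro h
    exact ⟨fun i j => h (.inl i) (.inl j), fun i j => h (.inr i) (.inr j),
      fun i j => h (.inl i) (.inr j), fun i j => h (.inr i) (.inl j)⟩

theorem xblk_eq_toBlocks₁₁_submatrix :
    Xblk n k l A = (A.submatrix finSumFinEquiv finSumFinEquiv).toBlocks₁₁ := rfl

theorem yblk_eq_toBlocks₂₂_submatrix :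
    Yblk n k l A = (A.submatrix finSumFinEquiv finSumFinEquiv).toBlocks₂₂ := rfl

theorem ber_eq_berezinian_submatrix :
    ber n k l A = berezinian (A.submatrix finSumFinEquiv finSumFinEquiv) := rfl

theorem berStar_eq_berezinianStar_submatrix :
    berStar n k l A = berezinianStar (A.submatrix finSumFinEquiv finSumFinEquiv) := rfl

theorem mem_parityPart_indexParity_add {p r : Fin k ⊕ Fin l} {c : SuperAlg n}
    (hc₀ : ((finSumFinEquiv p : ℕ) < k ↔ (finSumFinEquiv r : ℕ) < k) → c ∈ evenPart n)
    (hc₁ : ¬((finSumFinEquiv p : ℕ) < k ↔ (finSumFinEquiv r : ℕ) < k) → c ∈ oddPart n) :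
    c ∈ parityPart ℂ (Fin n → ℂ) (indexParity p + indexParity r) := by
  rcases p with p | p <;> rcases r with r | r
  · exact hc₀ (by simp)
  · exact hc₁ (by simp)
  · exact hc₁ (by simp)
  · exact hc₀ (by simp)

end FinSumIndices

/-- Let `A` be an even `(k|l)`-supermatrix over `Λ`, let `p ≠ r` be row
indices, and let `λ ∈ Λ₀` if rows `p` and `r` have the same parity, `λ ∈ Λ₁` if they have
opposite parity.  Let `B` be obtained from `A` by replacing row `p` with (row `p`) + `λ`·(row
`r`).  Then `B` is again an even `(k|l)`-supermatrix; if the odd-odd blocks of both `A` and `B`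
are invertible then `ber(B) = ber(A)`, and if the even-even blocks of both `A` and `B` are
invertible then `ber*(B) = ber*(A)`. -/
theorem statement14 (n k l : ℕ) (A : Matrix (Fin (k + l)) (Fin (k + l)) (SuperAlg n))
    (hA : IsEvenSupermatrix n k l A) (p r : Fin (k + l)) (hpr : p ≠ r) (lam : SuperAlg n)
    (hlam₀ : ((((p : ℕ) < k) ↔ ((r : ℕ) < k)) → lam ∈ evenPart n))
    (hlam₁ : (¬ (((p : ℕ) < k) ↔ ((r : ℕ) < k)) → lam ∈ oddPart n)) :
    IsEvenSupermatrix n k l (A.updateRow p fun j => A p j + lam * A r j) ∧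
    (IsUnit (Yblk n k l A) →
      IsUnit (Yblk n k l (A.updateRow p fun j => A p j + lam * A r j)) →
      ber n k l (A.updateRow p fun j => A p j + lam * A r j) = ber n k l A) ∧
    (IsUnit (Xblk n k l A) →
      IsUnit (Xblk n k l (A.updateRow p fun j => A p j + lam * A r j)) →
      berStar n k l (A.updateRow p fun j => A p j + lam * A r j) = berStar n k l A) := by
  obtain ⟨p, rfl⟩ := finSumFinEquiv.surjective p
  obtain ⟨r, rfl⟩ := finSumFinEquiv.surjective r
  simpa only [isEvenSupermatrix_iff_isSupermatrix_submatrix, xblk_eq_toBlocks₁₁_submatrix,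
    yblk_eq_toBlocks₂₂_submatrix, ber_eq_berezinian_submatrix, berStar_eq_berezinianStar_submatrix,
    Matrix.submatrix_updateRow_equiv, Matrix.submatrix_apply, Equiv.symm_apply_apply] using
    statement14_general (isEvenSupermatrix_iff_isSupermatrix_submatrix.1 hA)
      (ne_of_apply_ne _ hpr) (mem_parityPart_indexParity_add hlam₀ hlam₁)

end
end
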